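/- Let Δ ≥ 0, ω ≥ 0, χ ≥ 0 and ρ₁ > 0 be real numbers with Δ + ω > 0 and ρ₁² > 4·ω·χ. Suppose λ > 0 satisfies, for every t ∈ (0,1], the inequality (Δ + ω/t)·λ² − ρ₁·λ + t·χ ≥ 0. Then for every t with 0 < t ≤ 1 and 4·Δ·χ·t ≤ ρ₁² − 4·ω·χ, one has λ ≥ (ρ₁ + √(ρ₁² − 4·Δ·χ·t − 4·ω·χ)) / (2·(Δ + ω/t)). -/

import Mathlib

/-!
Let `q_t(x) = (Δ + ω / t) x² - ρ x + t χ`. Along a ray on which `x / t` is constant,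
`q_t(x) / x - Δ x` is constant. Hence if `μ` is a root of `q_t` and `0 < x < μ`, the parameter
`s = t x / μ < t` satisfies `q_s(x) = Δ x (x - μ) ≤ 0`. If `Δ > 0` this contradicts `q_s(x) ≥ 0`.
If `Δ = 0`, the quadratic polynomial `s ↦ s q_s(x)` vanishes at an interior point of an interval on
which it is nonnegative, so it has a double root there, which forces `ρ² = 4 ω χ`.
-/

open Filter Topology

theorem discrim_eq_zero_of_eventually_nonneg {a b c x : ℝ} (hx : a * (x * x) + b * x + c = 0)
    (h : ∀ᶠ y in 𝓝 x, 0 ≤ a * (y * y) + b * y + c) : discrim a b c = 0 := by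
  have hmin : IsLocalMin (fun y ↦ a * (y * y) + b * y + c) x := by
    filter_upwards [h] with y hy
    exact hx.trans_le hy
  have hderiv : HasDerivAt (fun y ↦ a * (y * y) + b * y + c) (2 * a * x + b) x := by
    refine (((((hasDerivAt_id' x).mul (hasDerivAt_id' x)).const_mul a).add
      ((hasDerivAt_id' x).const_mul b)).add_const c).congr_deriv ?_
    ring
  rw [discrim_eq_sq_of_quadratic_eq_zero hx, hmin.hasDerivAt_eq_zero hderiv, zero_pow two_ne_zero]

/-- The quadratic in the eigenvalue `x` of the basic eigenvalue inequality, after the rescaling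
`χ ↦ t χ`, `ω ↦ ω / t`. -/
def eigenvalueQuadratic {K : Type*} [Field K] (Δ ω χ ρ t x : K) : K :=
  (Δ + ω / t) * x ^ 2 - ρ * x + t * χ

namespace eigenvalueQuadratic

section Field

variable {K : Type*} [Field K] {t x μ : K}

theorem apply_mul_div (Δ ω χ ρ t : K) (hx : x ≠ 0) (hμ : μ ≠ 0) :
    eigenvalueQuadratic Δ ω χ ρ (t * x / μ) x =
      x / μ * eigenvalueQuadratic Δ ω χ ρ t μ + Δ * x * (x - μ) := by
  unfold eigenvalueQuadratic
  field_simp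
  ring

theorem param_mul (Δ ω χ ρ : K) (ht : t ≠ 0) :
    t * eigenvalueQuadratic Δ ω χ ρ t x =
      χ * (t * t) + (Δ * x - ρ) * x * t + ω * x ^ 2 := by
  unfold eigenvalueQuadratic
  field_simp
  ring

end Field

variable {Δ ω χ ρ t x μ : ℝ}

theorem sq_eq_of_eventually_nonneg (ht : 0 < t) (hx : x ≠ 0)
    (hzero : eigenvalueQuadratic Δ ω χ ρ t x = 0)
    (hnonneg : ∀ᶠ s in 𝓝 t, 0 ≤ eigenvalueQuadratic Δ ω χ ρ s x) :
    (Δ * x - ρ) ^ 2 = 4 * ω * χ := by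
  have hdiscrim : discrim χ ((Δ * x - ρ) * x) (ω * x ^ 2) = 0 := by
    apply discrim_eq_zero_of_eventually_nonneg (x := t)
    · rw [← param_mul Δ ω χ ρ ht.ne', hzero, mul_zero]
    · filter_upwards [hnonneg, lt_mem_nhds ht] with s hs hs₀
      rw [← param_mul Δ ω χ ρ hs₀.ne']
      exact mul_nonneg hs₀.le hs
  rw [discrim] at hdiscrim
  apply mul_left_cancel₀ (pow_ne_zero 2 hx)
  linear_combination hdiscrim

theorem root_le (hΔ : 0 ≤ Δ) (hdisc : 4 * ω * χ < ρ ^ 2) (ht : 0 < t) (hx : 0 < x)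
    (hμ : eigenvalueQuadratic Δ ω χ ρ t μ = 0)
    (h : ∀ s, 0 < s → s < t → 0 ≤ eigenvalueQuadratic Δ ω χ ρ s x) : μ ≤ x := by
  by_contra! hxμ
  have hμ₀ : 0 < μ := hx.trans hxμ
  have hs₀ : 0 < t * x / μ := by positivity
  have hst : t * x / μ < t := (div_lt_iff₀ hμ₀).2 (mul_lt_mul_of_pos_left hxμ ht)
  have hval : eigenvalueQuadratic Δ ω χ ρ (t * x / μ) x = Δ * x * (x - μ) := by
    rw [apply_mul_div Δ ω χ ρ t hx.ne' hμ₀.ne', hμ, mul_zero, zero_add]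
  obtain rfl : Δ = 0 := by
    have hnonneg : 0 ≤ Δ * x * (x - μ) := hval ▸ h _ hs₀ hst
    have hprod : Δ * x ≤ 0 := nonpos_of_mul_nonneg_left hnonneg (sub_neg.2 hxμ)
    exact (nonpos_of_mul_nonpos_left hprod hx).antisymm hΔ
  have hsq : (0 * x - ρ) ^ 2 = 4 * ω * χ := by
    apply sq_eq_of_eventually_nonneg hs₀ hx.ne'
    · rw [hval, zero_mul, zero_mul]
    · filter_upwards [Ioo_mem_nhds hs₀ hst] with s hs using h s hs.1 hs.2
  rw [zero_mul, zero_sub, neg_sq] at hsq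
  exact hdisc.ne' hsq

theorem quadratic_formula_eq_zero (ht : t ≠ 0) (hlead : Δ + ω / t ≠ 0)
    (hD : 4 * Δ * χ * t ≤ ρ ^ 2 - 4 * ω * χ) :
    eigenvalueQuadratic Δ ω χ ρ t
      ((ρ + √(ρ ^ 2 - 4 * Δ * χ * t - 4 * ω * χ)) / (2 * (Δ + ω / t))) = 0 := by
  have hdiscrim : discrim (Δ + ω / t) (-ρ) (t * χ) =
      √(ρ ^ 2 - 4 * Δ * χ * t - 4 * ω * χ) * √(ρ ^ 2 - 4 * Δ * χ * t - 4 * ω * χ) := by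
    rw [Real.mul_self_sqrt (by linarith), discrim]
    field_simp
    ring
  have hroot := (quadratic_eq_zero_iff hlead hdiscrim _).2 (Or.inl rfl)
  rw [neg_neg] at hroot
  rw [eigenvalueQuadratic]
  linear_combination hroot

end eigenvalueQuadratic

open eigenvalueQuadratic in
theorem stmt_3_general {Δ ω χ ρ₁ lam t : ℝ} (hΔ : 0 ≤ Δ) (hdisc : 4 * ω * χ < ρ₁ ^ 2)
    (hlam : 0 < lam) (ht : 0 < t) (hlead : Δ + ω / t ≠ 0)
    (hD : 4 * Δ * χ * t ≤ ρ₁ ^ 2 - 4 * ω * χ)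
    (h : ∀ s, 0 < s → s < t → 0 ≤ (Δ + ω / s) * lam ^ 2 - ρ₁ * lam + s * χ) :
    (ρ₁ + √(ρ₁ ^ 2 - 4 * Δ * χ * t - 4 * ω * χ)) / (2 * (Δ + ω / t)) ≤ lam :=
  root_le hΔ hdisc ht hlam (quadratic_formula_eq_zero ht.ne' hlead hD) h

theorem stmt_3 (Δ ω χ ρ₁ lam : ℝ) (hΔ : 0 ≤ Δ) (hω : 0 ≤ ω) (hχ : 0 ≤ χ)
    (hρ₁ : 0 < ρ₁) (hpos : 0 < Δ + ω) (hdisc : ρ₁ ^ 2 > 4 * ω * χ)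
    (hlam : 0 < lam)
    (h : ∀ t : ℝ, 0 < t → t ≤ 1 → (Δ + ω / t) * lam ^ 2 - ρ₁ * lam + t * χ ≥ 0) :
    ∀ t : ℝ, 0 < t → t ≤ 1 → 4 * Δ * χ * t ≤ ρ₁ ^ 2 - 4 * ω * χ →
      lam ≥ (ρ₁ + Real.sqrt (ρ₁ ^ 2 - 4 * Δ * χ * t - 4 * ω * χ)) / (2 * (Δ + ω / t)) := by
  intro t ht ht₁ hD
  have hlead : 0 < Δ + ω / t := hpos.trans_le (by gcongr; exact le_div_self hω ht ht₁)
  exact stmt_3_general hΔ hdisc hlam ht hlead.ne' hD fun s hs hst ↦ h s hs (hst.le.trans ht₁)
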